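/- (Existence of approximating sequences.) Assume that, in addition to (A.1)-(A.7), there exists γ > 0 such that f and g are γ-strongly convex in x: f(t,x',μ,α') − f(t,x,μ,α) − ⟨(x'−x,α'−α),∂_{(x,α)}f(t,x,μ,α)⟩ ≥ γ|x'−x|² + λ|α'−α|² and g(x',μ) − g(x,μ) − ⟨x'−x, ∂_x g(x,μ)⟩ ≥ γ|x'−x|². Then there exist constants λ' > 0 and c_L' > 0, depending only on λ, c_L and γ, and sequences (f^n)_{n≥1}, (g^n)_{n≥1} such that: (i) for every n, f^n and g^n satisfy (A.1)-(A.7) with parameters λ' and c_L', and ∂_x f^n and ∂_x g^n are bounded; (ii) for every bounded subset of [0,T]×ℝ^d×P₂(ℝ^d)×ℝ^k there exists n₀ such that for all n ≥ n₀, f^n and g^n coincide with f and g respectively on that subset. -/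

import Mathlib

open MeasureTheory ProbabilityTheory Real Filter
open scoped RealInnerProductSpace ENNReal NNReal

noncomputable section

/-- `ℝ^n` with the Euclidean inner product. -/
abbrev Vec (n : ℕ) := EuclideanSpace ℝ (Fin n)

/-- Membership in `𝒫₂(ℝ^n)`: Borel probability measure with finite second moment. -/
def IsP2 {n : ℕ} (μ : Measure (Vec n)) : Prop :=
  IsProbabilityMeasure μ ∧ Integrable (fun x => ‖x‖ ^ 2) μ

/-- The second moment `M₂(μ) = (∫ ‖x‖² dμ)^{1/2}`. -/
def M2 {n : ℕ} (μ : Measure (Vec n)) : ℝ :=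
  Real.sqrt (∫ x, ‖x‖ ^ 2 ∂μ)

/-- The 2-Wasserstein distance, defined as an infimum over couplings. -/
def W2 {n : ℕ} (μ ν : Measure (Vec n)) : ℝ :=
  sInf { r : ℝ | ∃ p : Measure (Vec n × Vec n),
    p.map Prod.fst = μ ∧ p.map Prod.snd = ν ∧
    r = Real.sqrt (∫ q, ‖q.1 - q.2‖ ^ 2 ∂p) }

/-- (A.2): for every `(t,μ)`, `f(t,·,μ,·)` is `C¹` with `c_L`-Lipschitz derivatives
and satisfies the `λ`-convexity condition in `(x,α)`. -/
def CondA2 (T : ℝ) (d k : ℕ) (lam : ℝ) (cL : ℝ≥0)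
    (f : ℝ → Vec d → Measure (Vec d) → Vec k → ℝ) : Prop :=
  ∀ t ∈ Set.Icc (0:ℝ) T, ∀ μ : Measure (Vec d), IsP2 μ →
    ContDiff ℝ 1 (fun p : Vec d × Vec k => f t p.1 μ p.2) ∧
    LipschitzWith cL (fun p : Vec d × Vec k =>
      (gradient (fun x => f t x μ p.2) p.1, gradient (fun a => f t p.1 μ a) p.2)) ∧
    ∀ (x x' : Vec d) (a a' : Vec k),
      f t x' μ a' - f t x μ a - ⟪x' - x, gradient (fun z => f t z μ a) x⟫
        - ⟪a' - a, gradient (fun b => f t x μ b) a⟫ ≥ lam * ‖a' - a‖ ^ 2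

/-- (A.2), second part: local boundedness of `f`, `∂ₓf` and `∂_αf`. -/
def CondA2loc (T : ℝ) (d k : ℕ)
    (f : ℝ → Vec d → Measure (Vec d) → Vec k → ℝ) : Prop :=
  ∀ R > 0, ∃ C, ∀ t ∈ Set.Icc (0:ℝ) T, ∀ (x : Vec d) (a : Vec k) (μ : Measure (Vec d)),
    IsP2 μ → ‖x‖ ≤ R → ‖a‖ ≤ R → M2 μ ≤ R →
      |f t x μ a| ≤ C ∧ ‖gradient (fun z => f t z μ a) x‖ ≤ C ∧
        ‖gradient (fun b => f t x μ b) a‖ ≤ C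

/-- (A.4): `g` is locally bounded and `g(·,μ)` is convex, `C¹`, with `c_L`-Lipschitz gradient. -/
def CondA4 (d : ℕ) (cL : ℝ≥0) (g : Vec d → Measure (Vec d) → ℝ) : Prop :=
  (∀ R > 0, ∃ C, ∀ (x : Vec d) (μ : Measure (Vec d)), IsP2 μ → ‖x‖ ≤ R → M2 μ ≤ R →
    |g x μ| ≤ C) ∧
  ∀ μ : Measure (Vec d), IsP2 μ →
    ContDiff ℝ 1 (fun x => g x μ) ∧ ConvexOn ℝ Set.univ (fun x => g x μ) ∧
    LipschitzWith cL (fun x => gradient (fun z => g z μ) x)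

/-- (A.5): bounds at the origin and local Lipschitz continuity with linear-growth factors,
in all variables including the measure (w.r.t. the 2-Wasserstein distance). -/
def CondA5 (T : ℝ) (d k : ℕ) (cL : ℝ≥0)
    (f : ℝ → Vec d → Measure (Vec d) → Vec k → ℝ)
    (g : Vec d → Measure (Vec d) → ℝ) : Prop :=
  (∀ t ∈ Set.Icc (0:ℝ) T,
    |f t 0 (Measure.dirac 0) 0| ≤ (cL : ℝ) ∧
    ‖gradient (fun z => f t z (Measure.dirac 0) 0) 0‖ ≤ (cL : ℝ) ∧
    ‖gradient (fun b => f t 0 (Measure.dirac 0) b) 0‖ ≤ (cL : ℝ)) ∧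
  (∀ t ∈ Set.Icc (0:ℝ) T, ∀ (x x' : Vec d) (a a' : Vec k) (μ μ' : Measure (Vec d)),
    IsP2 μ → IsP2 μ' →
      |f t x' μ' a' - f t x μ a| ≤
        (cL : ℝ) * (1 + ‖(x', a')‖ + ‖(x, a)‖ + M2 μ + M2 μ')
          * (‖(x' - x, a' - a)‖ + W2 μ' μ)) ∧
  (∀ (x x' : Vec d) (μ μ' : Measure (Vec d)), IsP2 μ → IsP2 μ' →
      |g x' μ' - g x μ| ≤
        (cL : ℝ) * (1 + ‖x'‖ + ‖x‖ + M2 μ + M2 μ') * (‖x' - x‖ + W2 μ' μ))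

/-- (A.6): `|∂_α f(t,x,μ,0)| ≤ c_L`. -/
def CondA6 (T : ℝ) (d k : ℕ) (cL : ℝ≥0)
    (f : ℝ → Vec d → Measure (Vec d) → Vec k → ℝ) : Prop :=
  ∀ t ∈ Set.Icc (0:ℝ) T, ∀ (x : Vec d) (μ : Measure (Vec d)), IsP2 μ →
    ‖gradient (fun b => f t x μ b) 0‖ ≤ (cL : ℝ)

/-- (A.7): the weak mean-reverting condition. -/
def CondA7 (T : ℝ) (d k : ℕ) (cL : ℝ≥0)
    (f : ℝ → Vec d → Measure (Vec d) → Vec k → ℝ)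
    (g : Vec d → Measure (Vec d) → ℝ) : Prop :=
  ∀ t ∈ Set.Icc (0:ℝ) T, ∀ x : Vec d,
    ⟪x, gradient (fun z => f t z (Measure.dirac x) 0) 0⟫ ≥ -(cL : ℝ) * (1 + ‖x‖) ∧
    ⟪x, gradient (fun z => g z (Measure.dirac x)) 0⟫ ≥ -(cL : ℝ) * (1 + ‖x‖)

/-- The assumptions (A.2), (A.4)--(A.7) on the cost functions `f` and `g`. -/
def CostAssumptions (T : ℝ) (d k : ℕ) (lam : ℝ) (cL : ℝ≥0)
    (f : ℝ → Vec d → Measure (Vec d) → Vec k → ℝ)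
    (g : Vec d → Measure (Vec d) → ℝ) : Prop :=
  CondA2 T d k lam cL f ∧ CondA2loc T d k f ∧ CondA4 d cL g ∧
    CondA5 T d k cL f g ∧ CondA6 T d k cL f ∧ CondA7 T d k cL f g

/-!
Replace a measure by its radial projection onto the ball `M₂ ≤ n`, which does not increase `W₂`
because the projection onto a ball of `L²` is 1-Lipschitz, then replace `x ↦ F μ (x, a)` by its
infimal convolution with `K‖·‖`, where `K = c(1 + 4n)` bounds `∂ₓF` on the relevant ball. The
envelope is `K`-Lipschitz in `x`, and it coincides with `F` wherever `‖∂ₓF‖ ≤ K`.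

Strong convexity produces a minimizer `z` of the infimal convolution at `(x, a)`, with
`‖z - x‖ ≤ ‖∂ₓF‖ / γ`; the growth constants of the envelope are therefore uniform in `n`. The
derivative of the envelope at `(x, a)` is that of `F` at `(z, a)`, which gives (A.6). Comparing
first order expansions at these points shows that the envelope stays convex with the same gain in
`a`, and smooth with the same constant. As the truncation of `δₓ` rescales `x`, (A.7) loses a
factor `2`.
-/

section SmoothConvex

variable {E : Type*} [NormedAddCommGroup E] [NormedSpace ℝ E]

/-- The Bregman divergence of `F`, i.e. the error at `y` of the first order expansion at `x`. -/
def bregman (F : E → ℝ) (y x : E) : ℝ := F y - F x - fderiv ℝ F x (y - x)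

/-- `F` is convex with gain `q`, and smooth with constant `C` in the sense of convex optimization:
its Bregman divergence is pinched between `q (y - x)` and `C * ‖y - x‖ ^ 2`. -/
structure IsSmoothConvex (C : ℝ) (q : E → ℝ) (F : E → ℝ) : Prop where
  differentiable : Differentiable ℝ F
  gain_nonneg : ∀ u, 0 ≤ q u
  gain_le : ∀ x y, q (y - x) ≤ bregman F y x
  le_sq : ∀ x y, bregman F y x ≤ C * ‖y - x‖ ^ 2

theorem hasFDerivAt_of_abs_sub_le_sq {F : E → ℝ} {L : E →L[ℝ] ℝ} {x : E} {C : ℝ}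
    (h : ∀ y, |F y - F x - L (y - x)| ≤ C * ‖y - x‖ ^ 2) : HasFDerivAt F L x := by
  have hO : (fun y => F y - F x - L (y - x)) =O[nhds x] fun y => ‖y - x‖ ^ 2 :=
    .of_bound C (.of_forall fun y => by simpa using h y)
  exact .of_isLittleO (hO.trans_isLittleO (Asymptotics.isLittleO_pow_sub_sub x one_lt_two))

theorem norm_fderiv_le_of_abs_sub_le_mul {F ℓ : E → ℝ} {x : E} (hℓ : ContinuousAt ℓ x)
    (h : ∀ y, |F y - F x| ≤ ℓ y * ‖y - x‖) (h₀ : 0 ≤ ℓ x) : ‖fderiv ℝ F x‖ ≤ ℓ x := by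
  refine le_of_forall_pos_le_add fun ε hε => norm_fderiv_le_of_lip' ℝ (by positivity) ?_
  filter_upwards [hℓ.eventually_le_const (lt_add_of_pos_right (ℓ x) hε)] with y hy
  exact (h y).trans (by gcongr)

theorem convexOn_univ_of_subgradient {F : E → ℝ} {L : E → E →L[ℝ] ℝ}
    (h : ∀ x y, F x + L x (y - x) ≤ F y) : ConvexOn ℝ Set.univ F := by
  refine ⟨convex_univ, fun x _ y _ s t hs ht hst => ?_⟩
  set w := s • x + t • y with hw
  have hcancel : s * L w (x - w) + t * L w (y - w) = 0 := by
    have hcomb : s • (x - w) + t • (y - w) = 0 := by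
      rw [hw, ← sub_eq_of_eq_add hst.symm]; module
    simpa only [map_add, map_smul, smul_eq_mul, map_zero] using congrArg (L w) hcomb
  calc F w = s * (F w + L w (x - w)) + t * (F w + L w (y - w)) := by
        linear_combination -F w * hst - hcancel
    _ ≤ s * F x + t * F y := by gcongr <;> exact h w _

namespace IsSmoothConvex

variable {C : ℝ} {q F : E → ℝ}

theorem of_norm_fderiv_sub_le (hF : Differentiable ℝ F) (hq : ∀ u, 0 ≤ q u)
    (hlow : ∀ x y, q (y - x) ≤ bregman F y x)
    (hlip : ∀ x y, ‖fderiv ℝ F y - fderiv ℝ F x‖ ≤ C * ‖y - x‖) : IsSmoothConvex C q F := by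
  refine ⟨hF, hq, hlow, fun x y => ?_⟩
  have hsymm : bregman F y x + bregman F x y = (fderiv ℝ F y - fderiv ℝ F x) (y - x) := by
    rw [bregman, bregman, ← neg_sub y x, map_neg, sub_apply]
    ring
  have hxy : 0 ≤ bregman F x y := (hq _).trans (hlow y x)
  calc bregman F y x ≤ (fderiv ℝ F y - fderiv ℝ F x) (y - x) := by linarith
    _ ≤ ‖fderiv ℝ F y - fderiv ℝ F x‖ * ‖y - x‖ :=
        (Real.le_norm_self _).trans (ContinuousLinearMap.le_opNorm _ _)
    _ ≤ C * ‖y - x‖ * ‖y - x‖ := by gcongr; exact hlip x y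
    _ = C * ‖y - x‖ ^ 2 := by ring

variable (h : IsSmoothConvex C q F)
include h

theorem mono {C' : ℝ} (hC : C ≤ C') : IsSmoothConvex C' q F where
  differentiable := h.differentiable
  gain_nonneg := h.gain_nonneg
  gain_le := h.gain_le
  le_sq x y := (h.le_sq x y).trans (by gcongr)

theorem add_fderiv_le (x y : E) : F x + fderiv ℝ F x (y - x) ≤ F y := by
  have := (h.gain_nonneg _).trans (h.gain_le x y)
  rw [bregman] at this
  linarith

theorem convexOn : ConvexOn ℝ Set.univ F :=
  convexOn_univ_of_subgradient h.add_fderiv_le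

theorem fderiv_sub_fderiv_apply_le (x y v : E) (hv : ‖v‖ = ‖x - y‖) :
    (fderiv ℝ F x - fderiv ℝ F y) v ≤ 2 * C * ‖x - y‖ ^ 2 := by
  have hlow := h.add_fderiv_le x (y + v)
  have hup := h.le_sq y (y + v)
  have hup' := h.le_sq x y
  rw [bregman, add_sub_cancel_left, hv] at hup
  rw [bregman, norm_sub_rev y x] at hup'
  rw [add_sub_right_comm, map_add] at hlow
  rw [sub_apply]
  linarith

theorem norm_fderiv_sub_le (x y : E) :
    ‖fderiv ℝ F x - fderiv ℝ F y‖ ≤ 2 * C * ‖x - y‖ := by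
  rcases eq_or_ne x y with rfl | hxy
  · simp
  have hpos : 0 < ‖x - y‖ := norm_sub_pos_iff.2 hxy
  have hC : 0 ≤ C := nonneg_of_mul_nonneg_left
    ((h.gain_nonneg _).trans ((h.gain_le y x).trans (h.le_sq y x))) (by positivity)
  refine ContinuousLinearMap.opNorm_le_of_unit_norm (by positivity) fun u hu => ?_
  have hscaled : ∀ s : ℝ, |s| = 1 →
      s * (fderiv ℝ F x - fderiv ℝ F y) u ≤ 2 * C * ‖x - y‖ := fun s hs => by
    have := h.fderiv_sub_fderiv_apply_le x y (‖x - y‖ • s • u) (by simp [norm_smul, hs, hu])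
    rw [map_smul, map_smul, smul_eq_mul, smul_eq_mul] at this
    exact le_of_mul_le_mul_left (by linarith) hpos
  exact abs_le'.2 ⟨by simpa using hscaled 1 (by simp), by simpa using hscaled (-1) (by simp)⟩

theorem contDiff : ContDiff ℝ 1 F := by
  refine contDiff_one_iff_fderiv.2 ⟨h.differentiable, ?_⟩
  refine (LipschitzWith.of_dist_le' (K := 2 * C) fun x y => ?_).continuous
  simpa only [dist_eq_norm] using h.norm_fderiv_sub_le x y

end IsSmoothConvex

end SmoothConvex

section LipschitzEnvelope

variable {X : Type*} [NormedAddCommGroup X]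

/-- The function minimized over `z` by the Lipschitz envelope of `φ` at `x`. -/
def penalized (K : ℝ) (φ : X → ℝ) (x z : X) : ℝ := φ z + K * ‖x - z‖

/-- The Pasch–Hausdorff envelope of `φ`: its infimal convolution with `K * ‖·‖`. -/
def lipEnvelope (K : ℝ) (φ : X → ℝ) (x : X) : ℝ := ⨅ z, penalized K φ x z

variable {K γ : ℝ} {φ : X → ℝ} {x z : X}

theorem lipEnvelope_eq_of_isMinOn (hz : IsMinOn (penalized K φ x) Set.univ z) :
    lipEnvelope K φ x = φ z + K * ‖x - z‖ :=
  IsLeast.csInf_eq ⟨Set.mem_range_self z, Set.forall_mem_range.2 (isMinOn_univ_iff.1 hz)⟩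

theorem lipEnvelope_le_of_isMinOn (hz : IsMinOn (penalized K φ x) Set.univ z) (y : X) :
    lipEnvelope K φ x ≤ φ y + K * ‖x - y‖ :=
  (lipEnvelope_eq_of_isMinOn hz).trans_le (isMinOn_univ_iff.1 hz y)

variable [NormedSpace ℝ X] {p : X →L[ℝ] ℝ}

theorem isMinOn_penalized_self (h : ∀ y, φ x + p (y - x) ≤ φ y) (hp : ‖p‖ ≤ K) :
    IsMinOn (penalized K φ x) Set.univ x := by
  refine isMinOn_univ_iff.2 fun y => ?_
  have hpy : -p (y - x) ≤ K * ‖x - y‖ := by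
    rw [norm_sub_rev]
    exact (neg_le_abs _).trans (p.le_of_opNorm_le hp _)
  simp only [penalized, sub_self, norm_zero, mul_zero]
  linarith [h y]

theorem norm_sub_le_of_strong_subgradient {y : X} (hγ : 0 < γ)
    (h : φ x + p (y - x) + γ * ‖y - x‖ ^ 2 ≤ φ y) (hle : φ y ≤ φ x) : ‖y - x‖ ≤ ‖p‖ / γ := by
  have hp : -p (y - x) ≤ ‖p‖ * ‖y - x‖ := (neg_le_abs _).trans (p.le_opNorm _)
  rw [le_div_iff₀ hγ]
  rcases (norm_nonneg (y - x)).eq_or_lt with hzero | hpos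
  · rw [← hzero, zero_mul]
    exact norm_nonneg p
  · exact le_of_mul_le_mul_right (by linarith) hpos

theorem norm_isMinOn_penalized_sub_le (hγ : 0 < γ) (hK : 0 ≤ K)
    (h : ∀ y, φ x + p (y - x) + γ * ‖y - x‖ ^ 2 ≤ φ y)
    (hz : IsMinOn (penalized K φ x) Set.univ z) : ‖z - x‖ ≤ ‖p‖ / γ := by
  refine norm_sub_le_of_strong_subgradient hγ (h z) ?_
  have hzx : φ z + K * ‖x - z‖ ≤ φ x + K * ‖x - x‖ := isMinOn_univ_iff.1 hz x
  rw [sub_self, norm_zero, mul_zero, add_zero] at hzx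
  exact (le_add_of_nonneg_right (by positivity)).trans hzx

theorem exists_isMinOn_penalized [ProperSpace X] (hφ : Continuous φ) (hγ : 0 < γ) (hK : 0 ≤ K)
    (h : ∀ y, φ x + p (y - x) + γ * ‖y - x‖ ^ 2 ≤ φ y) :
    ∃ z, IsMinOn (penalized K φ x) Set.univ z := by
  have hcont : Continuous (penalized K φ x) := by unfold penalized; fun_prop
  simp only [isMinOn_univ_iff]
  refine hcont.exists_forall_le' x ?_
  filter_upwards [(isCompact_closedBall x (‖p‖ / γ)).compl_mem_cocompact] with y hy
  have hlt : φ x < φ y := by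
    contrapose! hy
    simpa [dist_eq_norm] using norm_sub_le_of_strong_subgradient hγ (h y) hy
  simp only [penalized, sub_self, norm_zero, mul_zero, add_zero]
  exact hlt.le.trans (le_add_of_nonneg_right (by positivity))

theorem sub_apply_le_of_isMinOn_add {ψ : X → ℝ} (hmin : IsMinOn (fun y => φ y + ψ y) Set.univ z)
    (hφ : HasFDerivAt φ p z) (hψ : ConvexOn ℝ Set.univ ψ) (y : X) : ψ z - p (y - z) ≤ ψ y := by
  -- On the segment from `z` to `y`, the convex `ψ` lies below its chord.
  set χ : ℝ → ℝ := fun t => φ (AffineMap.lineMap z y t) + t * (ψ y - ψ z) with hχ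
  have hχmin : IsMinOn χ (Set.Icc 0 1) 0 := by
    intro t ht
    have hchord := hψ.2 (Set.mem_univ z) (Set.mem_univ y) (sub_nonneg.2 ht.2) ht.1
      (sub_add_cancel 1 t)
    have hmint := isMinOn_univ_iff.1 hmin (AffineMap.lineMap z y t)
    rw [← AffineMap.lineMap_apply_module] at hchord
    simp only [smul_eq_mul] at hchord
    simp only [hχ, Set.mem_ofPred_eq, AffineMap.lineMap_apply_zero]
    linarith
  have hχderiv : HasDerivAt χ (p (y - z) + 1 * (ψ y - ψ z)) 0 := by
    refine HasDerivAt.add ?_ ((hasDerivAt_id 0).mul_const _)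
    refine HasFDerivAt.comp_hasDerivAt (f := AffineMap.lineMap z y) 0 ?_
      AffineMap.hasDerivAt_lineMap
    simpa using hφ
  have hnonneg := hχmin.localize.hasFDerivWithinAt_nonneg
    hχderiv.hasFDerivAt.hasFDerivWithinAt
    (mem_posTangentConeAt_of_segment_subset (y := 1) (by simp [segment_eq_Icc]))
  have : 0 ≤ p (y - z) + 1 * (ψ y - ψ z) := by simpa using hnonneg
  linarith

theorem le_add_apply_of_isMinOn_penalized (hK : 0 ≤ K) (hφ : HasFDerivAt φ p z)
    (hz : IsMinOn (penalized K φ x) Set.univ z) (y : X) :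
    K * ‖x - z‖ ≤ K * ‖x - y‖ + p (y - z) := by
  have hconv : ConvexOn ℝ Set.univ fun y => K * ‖x - y‖ := by
    simpa only [dist_eq_norm, norm_sub_rev x, smul_eq_mul] using (convexOn_univ_dist x).smul hK
  linarith [sub_apply_le_of_isMinOn_add hz hφ hconv y]

theorem norm_le_of_isMinOn_penalized (hK : 0 ≤ K) (hφ : HasFDerivAt φ p z)
    (hz : IsMinOn (penalized K φ x) Set.univ z) : ‖p‖ ≤ K := by
  have hle : ∀ v, p v ≤ K * ‖v‖ := fun v => by
    have hmin := le_add_apply_of_isMinOn_penalized hK hφ hz (z - v)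
    have htri : ‖x - (z - v)‖ ≤ ‖x - z‖ + ‖v‖ := by
      rw [← sub_add]; exact norm_add_le _ _
    rw [sub_sub_cancel_left, map_neg] at hmin
    linarith [mul_le_mul_of_nonneg_left htri hK]
  refine p.opNorm_le_bound hK fun v => abs_le'.2 ⟨hle v, ?_⟩
  simpa using hle (-v)

end LipschitzEnvelope

section PartialEnvelope

variable {X A : Type*} [NormedAddCommGroup X] [NormedAddCommGroup A]

/-- The gain of convexity `(x, a) ↦ γ‖x‖² + λ‖a‖²`. -/
def quadGain (γ lam : ℝ) (p : X × A) : ℝ := γ * ‖p.1‖ ^ 2 + lam * ‖p.2‖ ^ 2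

/-- The Lipschitz envelope of `F` in its first variable, the second one being frozen. -/
def partialEnvelope (K : ℝ) (F : X × A → ℝ) (p : X × A) : ℝ :=
  lipEnvelope K (fun z => F (z, p.2)) p.1

/-- The oscillation bound of (A.5): `F` and `G` are the costs at two measures, `m` stands for
the sum of the second moments of these measures and `w` for their Wasserstein distance. -/
def GrowthLipschitz (c m w : ℝ) (F G : X × A → ℝ) : Prop :=
  ∀ p p', |G p' - F p| ≤ c * (1 + ‖p'‖ + ‖p‖ + m) * (‖p' - p‖ + w)

theorem GrowthLipschitz.symm {c m w : ℝ} {F G : X × A → ℝ} (h : GrowthLipschitz c m w F G) :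
    GrowthLipschitz c m w G F := fun p p' => by
  rw [abs_sub_comm, norm_sub_rev, add_right_comm 1]
  exact h p' p

theorem GrowthLipschitz.mono {c m m' w w' : ℝ} {F G : X × A → ℝ}
    (h : GrowthLipschitz c m w F G) (hc : 0 ≤ c) (hm₀ : 0 ≤ m) (hm : m ≤ m') (hw₀ : 0 ≤ w)
    (hw : w ≤ w') : GrowthLipschitz c m' w' F G := fun p p' => by
  have hm₀' := hm₀.trans hm
  exact (h p p').trans (by gcongr)

variable [NormedSpace ℝ X] [NormedSpace ℝ A]

/-- The partial derivative of `F` in its first variable. -/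
def fderivFst (F : X × A → ℝ) (p : X × A) : X →L[ℝ] ℝ :=
  (fderiv ℝ F p).comp (ContinuousLinearMap.inl ℝ X A)

variable {C K c m w γ lam : ℝ} {F G : X × A → ℝ} {p : X × A} {z : X}

theorem fderivFst_sub (F : X × A → ℝ) (p : X × A) (y : X) :
    fderivFst F p (y - p.1) = fderiv ℝ F p ((y, p.2) - p) := by
  simp [fderivFst, show ((y, p.2) : X × A) - p = (y - p.1, 0) by ext <;> simp]

theorem hasFDerivAt_slice_fst {x : X} {a : A} (hF : DifferentiableAt ℝ F (x, a)) :
    HasFDerivAt (fun y => F (y, a)) (fderivFst F (x, a)) x :=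
  hF.hasFDerivAt.comp x (hasFDerivAt_prodMk_left x a)

theorem norm_comp_inl_le (L : X × A →L[ℝ] ℝ) : ‖L.comp (.inl ℝ X A)‖ ≤ ‖L‖ :=
  (L.opNorm_comp_le _).trans <|
    mul_le_of_le_one_right (norm_nonneg _) (ContinuousLinearMap.norm_inl_le_one ℝ X A)

theorem norm_comp_inr_le (L : X × A →L[ℝ] ℝ) : ‖L.comp (.inr ℝ X A)‖ ≤ ‖L‖ :=
  (L.opNorm_comp_le _).trans <|
    mul_le_of_le_one_right (norm_nonneg _) (ContinuousLinearMap.norm_inr_le_one ℝ X A)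

theorem GrowthLipschitz.norm_fderiv_le (hm : 0 ≤ m) (hc : 0 ≤ c)
    (h : GrowthLipschitz c m 0 F F) : ‖fderiv ℝ F p‖ ≤ c * (1 + 2 * ‖p‖ + m) := by
  have hle : ‖fderiv ℝ F p‖ ≤ c * (1 + ‖p‖ + ‖p‖ + m) :=
    norm_fderiv_le_of_abs_sub_le_mul (ℓ := fun y => c * (1 + ‖y‖ + ‖p‖ + m)) (by fun_prop)
      (fun y => by simpa only [add_zero] using h p y) (by positivity)
  linarith

namespace IsSmoothConvex

variable (h : IsSmoothConvex C (quadGain γ lam) F)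
include h

theorem add_fderivFst_add_le (p : X × A) (y : X) :
    F p + fderivFst F p (y - p.1) + γ * ‖y - p.1‖ ^ 2 ≤ F (y, p.2) := by
  have := h.gain_le p (y, p.2)
  simp only [bregman, quadGain, Prod.fst_sub, Prod.snd_sub, sub_self, norm_zero] at this
  linarith [fderivFst_sub F p y]

theorem isMinOn_self (hp : ‖fderivFst F p‖ ≤ K) :
    IsMinOn (penalized K (fun y => F (y, p.2)) p.1) Set.univ p.1 :=
  isMinOn_penalized_self (fun y => (fderivFst_sub F p y).symm ▸ h.add_fderiv_le p (y, p.2)) hp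

theorem partialEnvelope_eq (hp : ‖fderivFst F p‖ ≤ K) : partialEnvelope K F p = F p :=
  (lipEnvelope_eq_of_isMinOn (h.isMinOn_self hp)).trans (by simp)

theorem norm_isMinOn_sub_le (hγ : 0 < γ) (hK : 0 ≤ K)
    (hz : IsMinOn (penalized K (fun y => F (y, p.2)) p.1) Set.univ z) :
    ‖z - p.1‖ ≤ ‖fderivFst F p‖ / γ :=
  norm_isMinOn_penalized_sub_le hγ hK (h.add_fderivFst_add_le p) hz

theorem gain_le_partialEnvelope_sub (hγ : 0 ≤ γ) (hK : 0 ≤ K)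
    (hz : IsMinOn (penalized K (fun y => F (y, p.2)) p.1) Set.univ z) (p' : X × A) :
    quadGain 0 lam (p' - p) ≤
      partialEnvelope K F p' - partialEnvelope K F p - fderiv ℝ F (z, p.2) (p' - p) := by
  have hEp : partialEnvelope K F p = F (z, p.2) + K * ‖p.1 - z‖ := lipEnvelope_eq_of_isMinOn hz
  have hEp' : F (z, p.2) + K * ‖p.1 - z‖ + fderiv ℝ F (z, p.2) (p' - p) + quadGain 0 lam (p' - p) ≤
      partialEnvelope K F p' := le_ciInf fun z' => by
    have hgain := h.gain_le (z, p.2) (z', p'.2)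
    have hpen := le_add_apply_of_isMinOn_penalized hK
      (hasFDerivAt_slice_fst (h.differentiable _)) hz (p.1 - p'.1 + z')
    have hsplit : ((z', p'.2) : X × A) - (z, p.2) =
        (p' - p) + ((p.1 - p'.1 + z', p.2) - (z, p.2)) := by
      ext <;> simp; abel
    rw [fderivFst_sub F (z, p.2), show p.1 - (p.1 - p'.1 + z') = p'.1 - z' by abel] at hpen
    rw [bregman, hsplit, map_add, ← hsplit] at hgain
    simp only [quadGain, Prod.fst_sub, Prod.snd_sub, penalized, zero_mul, zero_add] at hgain ⊢
    linarith [mul_nonneg hγ (sq_nonneg ‖z' - z‖)]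
  linarith

theorem quadGain_zero_nonneg (p : X × A) : 0 ≤ quadGain 0 lam p := by
  simpa [quadGain] using h.gain_nonneg (0, p.2)

variable [ProperSpace X]

theorem exists_isMinOn (hγ : 0 < γ) (hK : 0 ≤ K) (p : X × A) :
    ∃ z, IsMinOn (penalized K (fun y => F (y, p.2)) p.1) Set.univ z :=
  exists_isMinOn_penalized (h.differentiable.continuous.comp (by fun_prop)) hγ hK
    (h.add_fderivFst_add_le p)

theorem partialEnvelope_le (hγ : 0 < γ) (hK : 0 ≤ K) (p : X × A) (y : X) :
    partialEnvelope K F p ≤ F (y, p.2) + K * ‖p.1 - y‖ :=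
  (h.exists_isMinOn hγ hK p).elim fun _ hz => lipEnvelope_le_of_isMinOn hz y

theorem partialEnvelope_sub_le (hγ : 0 < γ) (hK : 0 ≤ K)
    (hz : IsMinOn (penalized K (fun y => F (y, p.2)) p.1) Set.univ z) (p' : X × A) :
    partialEnvelope K F p' - partialEnvelope K F p - fderiv ℝ F (z, p.2) (p' - p) ≤
      C * ‖p' - p‖ ^ 2 := by
  have hEp : partialEnvelope K F p = F (z, p.2) + K * ‖p.1 - z‖ := lipEnvelope_eq_of_isMinOn hz
  have hEp' := h.partialEnvelope_le hγ hK p' (z + (p'.1 - p.1))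
  have hle := h.le_sq (z, p.2) (z + (p'.1 - p.1), p'.2)
  rw [bregman, show ((z + (p'.1 - p.1), p'.2) : X × A) - (z, p.2) = p' - p by ext <;> simp] at hle
  rw [show p'.1 - (z + (p'.1 - p.1)) = p.1 - z by abel] at hEp'
  linarith

theorem hasFDerivAt_partialEnvelope (hγ : 0 < γ) (hK : 0 ≤ K)
    (hz : IsMinOn (penalized K (fun y => F (y, p.2)) p.1) Set.univ z) :
    HasFDerivAt (partialEnvelope K F) (fderiv ℝ F (z, p.2)) p :=
  hasFDerivAt_of_abs_sub_le_sq fun p' =>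
    (abs_of_nonneg ((h.quadGain_zero_nonneg _).trans
      (h.gain_le_partialEnvelope_sub hγ.le hK hz p'))).trans_le
      (h.partialEnvelope_sub_le hγ hK hz p')

theorem exists_hasFDerivAt_partialEnvelope (hγ : 0 < γ) (hK : 0 ≤ K) (p : X × A) :
    ∃ z, HasFDerivAt (partialEnvelope K F) (fderiv ℝ F (z, p.2)) p :=
  (h.exists_isMinOn hγ hK p).imp fun _ hz => h.hasFDerivAt_partialEnvelope hγ hK hz

theorem isSmoothConvex_partialEnvelope (hγ : 0 < γ) (hK : 0 ≤ K) :
    IsSmoothConvex C (quadGain 0 lam) (partialEnvelope K F) where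
  differentiable p :=
    (h.exists_hasFDerivAt_partialEnvelope hγ hK p).elim fun _ hz => hz.differentiableAt
  gain_nonneg := h.quadGain_zero_nonneg
  gain_le p p' := by
    obtain ⟨z, hz⟩ := h.exists_isMinOn hγ hK p
    rw [bregman, (h.hasFDerivAt_partialEnvelope hγ hK hz).fderiv]
    exact h.gain_le_partialEnvelope_sub hγ.le hK hz p'
  le_sq p p' := by
    obtain ⟨z, hz⟩ := h.exists_isMinOn hγ hK p
    rw [bregman, (h.hasFDerivAt_partialEnvelope hγ hK hz).fderiv]
    exact h.partialEnvelope_sub_le hγ hK hz p'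

theorem norm_fderivFst_partialEnvelope_le (hγ : 0 < γ) (hK : 0 ≤ K) (p : X × A) :
    ‖fderivFst (partialEnvelope K F) p‖ ≤ K := by
  obtain ⟨z, hz⟩ := h.exists_isMinOn hγ hK p
  rw [fderivFst, (h.hasFDerivAt_partialEnvelope hγ hK hz).fderiv]
  exact norm_le_of_isMinOn_penalized hK (hasFDerivAt_slice_fst (h.differentiable _)) hz

theorem fderiv_partialEnvelope_eq (hγ : 0 < γ) (hp : ‖fderivFst F p‖ ≤ K) :
    fderiv ℝ (partialEnvelope K F) p = fderiv ℝ F p :=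
  (h.hasFDerivAt_partialEnvelope hγ ((norm_nonneg _).trans hp)
    (h.isMinOn_self hp)).fderiv

theorem exists_partialEnvelope_sub_le_shift (hγ : 0 < γ) (hK : 0 ≤ K)
    (hG : IsSmoothConvex C (quadGain γ lam) G) (p p' : X × A) :
    ∃ e : X, ‖e‖ ≤ ‖fderivFst F p‖ / γ ∧
      partialEnvelope K G p' - partialEnvelope K F p ≤
        G (p' + (e, 0)) - F (p + (e, 0)) := by
  obtain ⟨z, hz⟩ := h.exists_isMinOn hγ hK p
  refine ⟨z - p.1, h.norm_isMinOn_sub_le hγ hK hz, ?_⟩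
  have hEp : partialEnvelope K F p = F (z, p.2) + K * ‖p.1 - z‖ :=
    lipEnvelope_eq_of_isMinOn hz
  have hEp' := hG.partialEnvelope_le hγ hK p' (p'.1 + (z - p.1))
  rw [show p'.1 - (p'.1 + (z - p.1)) = p.1 - z by abel] at hEp'
  rw [show p + (z - p.1, 0) = (z, p.2) by ext <;> simp,
    show p' + (z - p.1, 0) = (p'.1 + (z - p.1), p'.2) by ext <;> simp]
  linarith

theorem partialEnvelope_sub_le_of_growthLipschitz (hγ : 0 < γ) (hK : 0 ≤ K)
    (hG : IsSmoothConvex C (quadGain γ lam) G) (hc : 0 ≤ c) (hw : 0 ≤ w)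
    (hFG : GrowthLipschitz c m w F G)
    (hfderivF : ∀ q, ‖fderiv ℝ F q‖ ≤ c * (1 + 2 * ‖q‖ + 2 * m)) (p p' : X × A) :
    partialEnvelope K G p' - partialEnvelope K F p ≤
      c * (1 + 4 * c / γ) * (1 + ‖p'‖ + ‖p‖ + m) * (‖p' - p‖ + w) := by
  obtain ⟨e, he, hle⟩ := h.exists_partialEnvelope_sub_le_shift hγ hK hG p p'
  have hshift : ∀ q : X × A, ‖q + (e, 0)‖ ≤ ‖q‖ + ‖e‖ := fun q =>
    (norm_add_le _ _).trans_eq (by simp [Prod.norm_def])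
  have he' : 2 * ‖e‖ ≤ 4 * c / γ * (1 + ‖p'‖ + ‖p‖ + m) := calc
    2 * ‖e‖ ≤ 2 * (c * (1 + 2 * ‖p‖ + 2 * m) / γ) := by
      gcongr
      exact he.trans (by gcongr; exact (norm_comp_inl_le _).trans (hfderivF p))
    _ = 2 * c / γ * (1 + 2 * ‖p‖ + 2 * m) := by ring
    _ ≤ 2 * c / γ * (2 * (1 + ‖p'‖ + ‖p‖ + m)) := by
      gcongr
      linarith [norm_nonneg p']
    _ = 4 * c / γ * (1 + ‖p'‖ + ‖p‖ + m) := by ring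
  calc partialEnvelope K G p' - partialEnvelope K F p
      ≤ c * (1 + ‖p' + (e, 0)‖ + ‖p + (e, 0)‖ + m) * (‖p' - p‖ + w) := by
        refine hle.trans ((le_abs_self _).trans ?_)
        exact (hFG (p + (e, 0)) (p' + (e, 0))).trans_eq (by rw [add_sub_add_right_eq_sub])
    _ ≤ c * ((1 + 4 * c / γ) * (1 + ‖p'‖ + ‖p‖ + m)) * (‖p' - p‖ + w) := by
        gcongr
        linarith [hshift p, hshift p']
    _ = _ := by ring

theorem growthLipschitz_partialEnvelope (hγ : 0 < γ) (hK : 0 ≤ K)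
    (hG : IsSmoothConvex C (quadGain γ lam) G) (hc : 0 ≤ c) (hw : 0 ≤ w)
    (hFG : GrowthLipschitz c m w F G)
    (hfderivF : ∀ q, ‖fderiv ℝ F q‖ ≤ c * (1 + 2 * ‖q‖ + 2 * m))
    (hfderivG : ∀ q, ‖fderiv ℝ G q‖ ≤ c * (1 + 2 * ‖q‖ + 2 * m)) :
    GrowthLipschitz (c * (1 + 4 * c / γ)) m w (partialEnvelope K F)
      (partialEnvelope K G) := fun p p' => by
  refine abs_sub_le_iff.2
    ⟨h.partialEnvelope_sub_le_of_growthLipschitz hγ hK hG hc hw hFG hfderivF p p', ?_⟩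
  rw [norm_sub_rev, add_right_comm 1]
  exact hG.partialEnvelope_sub_le_of_growthLipschitz hγ hK h hc hw hFG.symm hfderivG p' p

end IsSmoothConvex

end PartialEnvelope

section Gradient

section Slice

variable {X A : Type*} [NormedAddCommGroup X] [NormedAddCommGroup A] {x : X} {a : A}
  {F : X × A → ℝ}

theorem gradient_slice_fst [InnerProductSpace ℝ X] [CompleteSpace X] [NormedSpace ℝ A]
    (hF : DifferentiableAt ℝ F (x, a)) :
    gradient (fun z => F (z, a)) x = (InnerProductSpace.toDual ℝ X).symm (fderivFst F (x, a)) := by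
  rw [gradient, (hasFDerivAt_slice_fst hF).fderiv]

theorem norm_gradient_slice_fst [InnerProductSpace ℝ X] [CompleteSpace X] [NormedSpace ℝ A]
    (hF : DifferentiableAt ℝ F (x, a)) :
    ‖gradient (fun z => F (z, a)) x‖ = ‖fderivFst F (x, a)‖ := by
  rw [gradient_slice_fst hF, LinearIsometryEquiv.norm_map]

theorem gradient_slice_snd [NormedSpace ℝ X] [InnerProductSpace ℝ A] [CompleteSpace A]
    (hF : DifferentiableAt ℝ F (x, a)) :
    gradient (fun b => F (x, b)) a =
      (InnerProductSpace.toDual ℝ A).symm ((fderiv ℝ F (x, a)).comp (.inr ℝ X A)) :=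
  congrArg _ (hF.hasFDerivAt.comp a (hasFDerivAt_prodMk_right x a)).fderiv

theorem norm_gradient_slice_snd_le [NormedSpace ℝ X] [InnerProductSpace ℝ A] [CompleteSpace A]
    (hF : DifferentiableAt ℝ F (x, a)) :
    ‖gradient (fun b => F (x, b)) a‖ ≤ ‖fderiv ℝ F (x, a)‖ := by
  rw [gradient_slice_snd hF, LinearIsometryEquiv.norm_map]
  exact norm_comp_inr_le _

end Slice

variable {X A : Type*} [NormedAddCommGroup X] [NormedAddCommGroup A] [InnerProductSpace ℝ X]
  [InnerProductSpace ℝ A] [CompleteSpace X] [CompleteSpace A] {F : X × A → ℝ} {c : ℝ≥0}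

theorem fderiv_apply_eq_inner_gradient {p : X × A} (hF : DifferentiableAt ℝ F p) (v : X × A) :
    fderiv ℝ F p v = ⟪v.1, gradient (fun x => F (x, p.2)) p.1⟫
      + ⟪v.2, gradient (fun a => F (p.1, a)) p.2⟫ := by
  rw [gradient_slice_fst hF, gradient_slice_snd hF, real_inner_comm, real_inner_comm _ v.2,
    InnerProductSpace.toDual_symm_apply, InnerProductSpace.toDual_symm_apply, fderivFst]
  simp [← map_add]

theorem bregman_eq_sub_inner_gradient {x : X} {a : A} (hF : DifferentiableAt ℝ F (x, a)) (x' : X)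
    (a' : A) : bregman F (x', a') (x, a) = F (x', a') - F (x, a)
      - ⟪x' - x, gradient (fun z => F (z, a)) x⟫ - ⟪a' - a, gradient (fun b => F (x, b)) a⟫ := by
  rw [bregman, fderiv_apply_eq_inner_gradient hF, sub_add_eq_sub_sub, Prod.fst_sub, Prod.snd_sub]

theorem norm_fderiv_sub_le_of_lipschitzWith_gradient (hF : Differentiable ℝ F)
    (h : LipschitzWith c fun p : X × A =>
      (gradient (fun x => F (x, p.2)) p.1, gradient (fun a => F (p.1, a)) p.2)) (p q : X × A) :
    ‖fderiv ℝ F p - fderiv ℝ F q‖ ≤ 2 * c * ‖p - q‖ := by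
  have hgrad := max_le_iff.1 ((dist_eq_norm _ _).symm.trans_le ((h.dist_le_mul p q)))
  rw [dist_eq_norm] at hgrad
  refine ContinuousLinearMap.opNorm_le_bound _ (by positivity) fun v => ?_
  rw [sub_apply, fderiv_apply_eq_inner_gradient (hF p), fderiv_apply_eq_inner_gradient (hF q),
    add_sub_add_comm, ← inner_sub_right, ← inner_sub_right]
  calc _ ≤ ‖v.1‖ * (c * ‖p - q‖) + ‖v.2‖ * (c * ‖p - q‖) := by
        refine (norm_add_le _ _).trans (add_le_add ?_ ?_) <;>
        refine (norm_inner_le_norm _ _).trans (mul_le_mul_of_nonneg_left ?_ (norm_nonneg _))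
        exacts [hgrad.1, hgrad.2]
    _ ≤ ‖v‖ * (c * ‖p - q‖) + ‖v‖ * (c * ‖p - q‖) := by
        gcongr
        exacts [norm_fst_le v, norm_snd_le v]
    _ = 2 * c * ‖p - q‖ * ‖v‖ := by ring

theorem lipschitzWith_gradient_of_norm_fderiv_sub_le (hF : Differentiable ℝ F)
    (h : ∀ p q, ‖fderiv ℝ F p - fderiv ℝ F q‖ ≤ c * ‖p - q‖) :
    LipschitzWith c fun p : X × A =>
      (gradient (fun x => F (x, p.2)) p.1, gradient (fun a => F (p.1, a)) p.2) := by
  refine LipschitzWith.of_dist_le_mul fun p q => max_le ?_ ?_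
  · rw [gradient_slice_fst (hF p), gradient_slice_fst (hF q), LinearIsometryEquiv.dist_map,
      dist_eq_norm, dist_eq_norm, fderivFst, fderivFst, ← ContinuousLinearMap.sub_comp]
    exact (norm_comp_inl_le _).trans (h p q)
  · rw [gradient_slice_snd (hF p), gradient_slice_snd (hF q), LinearIsometryEquiv.dist_map,
      dist_eq_norm, dist_eq_norm, ← ContinuousLinearMap.sub_comp]
    exact (norm_comp_inr_le _).trans (h p q)

end Gradient

section RadialProjection

/-- The factor by which the radial projection onto the ball of radius `n` scales a vector
of norm `r`. -/
def radialFactor (n r : ℝ) : ℝ := n / max n r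

variable {n r : ℝ}

theorem radialFactor_pos (hn : 0 < n) : 0 < radialFactor n r :=
  div_pos hn (lt_max_of_lt_left hn)

theorem radialFactor_le_one (hn : 0 < n) : radialFactor n r ≤ 1 :=
  div_le_one_of_le₀ (le_max_left _ _) (hn.le.trans (le_max_left _ _))

theorem radialFactor_eq_one (hn : 0 < n) (hr : r ≤ n) : radialFactor n r = 1 := by
  rw [radialFactor, max_eq_left hr, div_self hn.ne']

theorem radialFactor_mul_self (hn : 0 < n) : radialFactor n r * r = min n r := by
  rw [radialFactor, div_mul_eq_mul_div, div_eq_iff (lt_max_of_lt_left hn).ne', min_mul_max]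

theorem inv_radialFactor_le (hn : 1 ≤ n) (hr : 0 ≤ r) : (radialFactor n r)⁻¹ ≤ 1 + r := by
  rw [radialFactor, inv_div, div_le_iff₀ (by linarith)]
  exact max_le (by nlinarith) (by nlinarith)

variable {H : Type*} [NormedAddCommGroup H] [InnerProductSpace ℝ H]

theorem norm_radialFactor_smul_sub_le (hn : 0 < n) (x y : H) :
    ‖radialFactor n ‖x‖ • x - radialFactor n ‖y‖ • y‖ ≤ ‖x - y‖ := by
  set s := radialFactor n ‖x‖ with hs
  set t := radialFactor n ‖y‖ with ht
  have hmin : |s * ‖x‖ - t * ‖y‖| ≤ |‖x‖ - ‖y‖| := by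
    rw [hs, ht, radialFactor_mul_self hn, radialFactor_mul_self hn]
    simpa using abs_min_sub_min_le_max n ‖x‖ n ‖y‖
  have hst : s * t ≤ 1 :=
    mul_le_one₀ (radialFactor_le_one hn) (radialFactor_pos hn).le (radialFactor_le_one hn)
  have hcs : (1 - s * t) * ⟪x, y⟫ ≤ (1 - s * t) * (‖x‖ * ‖y‖) :=
    mul_le_mul_of_nonneg_left (real_inner_le_norm x y) (sub_nonneg.2 hst)
  refine le_of_sq_le_sq ?_ (norm_nonneg _)
  rw [norm_sub_sq_real, norm_sub_sq_real, real_inner_smul_left, real_inner_smul_right,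
    norm_smul, norm_smul, Real.norm_of_nonneg (radialFactor_pos hn).le,
    Real.norm_of_nonneg (radialFactor_pos hn).le]
  linarith [sq_le_sq.2 hmin]

theorem neg_mul_le_inner_of_radialFactor_smul {c : ℝ} (hc : 0 ≤ c) (hn : 1 ≤ n) {x v : H}
    (h : -c * (1 + ‖radialFactor n ‖x‖ • x‖) ≤ ⟪radialFactor n ‖x‖ • x, v⟫) :
    -(2 * c) * (1 + ‖x‖) ≤ ⟪x, v⟫ := by
  set s := radialFactor n ‖x‖
  have hs : 0 < s := radialFactor_pos (by linarith)
  rw [norm_smul, Real.norm_of_nonneg hs.le, real_inner_smul_left, ← div_le_iff₀' hs] at h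
  refine le_trans ?_ h
  calc -(2 * c) * (1 + ‖x‖) ≤ -c * ((1 + ‖x‖) + ‖x‖) := by nlinarith [norm_nonneg x]
    _ ≤ -c * (s⁻¹ + ‖x‖) := mul_le_mul_of_nonpos_left
        (by gcongr; exact inv_radialFactor_le hn (norm_nonneg x)) (neg_nonpos.2 hc)
    _ = -c * (1 + s * ‖x‖) / s := by field_simp

end RadialProjection

section Wasserstein

variable {d : ℕ} {μ ν : Measure (Vec d)} {n : ℝ}

theorem M2_nonneg : 0 ≤ M2 μ := Real.sqrt_nonneg _

theorem M2_map_smul (s : ℝ) : M2 (μ.map (s • ·)) = |s| * M2 μ := by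
  rw [M2, M2, integral_map (by fun_prop) (by fun_prop)]
  simp only [norm_smul, mul_pow, integral_const_mul, Real.norm_eq_abs, sq_abs]
  rw [Real.sqrt_mul (sq_nonneg s), Real.sqrt_sq_eq_abs]

theorem isP2_dirac (x : Vec d) : IsP2 (Measure.dirac x) :=
  ⟨inferInstance, integrable_dirac (by simp)⟩

theorem M2_dirac (x : Vec d) : M2 (Measure.dirac x) = ‖x‖ := by
  simp [M2]

theorem IsP2.map_smul (hμ : IsP2 μ) (s : ℝ) : IsP2 (μ.map (s • ·)) := by
  have := hμ.1
  refine ⟨Measure.isProbabilityMeasure_map (by fun_prop), ?_⟩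
  rw [integrable_map_measure (by fun_prop) (by fun_prop)]
  simpa only [Function.comp_def, norm_smul, mul_pow] using hμ.2.const_mul (‖s‖ ^ 2)

theorem W2_nonneg : 0 ≤ W2 μ ν :=
  Real.sInf_nonneg (by rintro _ ⟨p, -, -, rfl⟩; exact Real.sqrt_nonneg _)

theorem W2_map_map_le {Ω : Type*} [MeasurableSpace Ω] (ρ : Measure Ω) {f g : Ω → Vec d}
    (hf : Measurable f) (hg : Measurable g) :
    W2 (ρ.map f) (ρ.map g) ≤ √(∫ ω, ‖f ω - g ω‖ ^ 2 ∂ρ) := by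
  refine csInf_le ⟨0, ?_⟩ ⟨ρ.map fun ω => (f ω, g ω), ?_, ?_, ?_⟩
  · rintro _ ⟨p, -, -, rfl⟩
    exact Real.sqrt_nonneg _
  · rw [Measure.map_map measurable_fst (hf.prodMk hg)]; rfl
  · rw [Measure.map_map measurable_snd (hf.prodMk hg)]; rfl
  · rw [integral_map (hf.prodMk hg).aemeasurable (by fun_prop)]

theorem W2_self (μ : Measure (Vec d)) : W2 μ μ = 0 :=
  le_antisymm (by simpa using W2_map_map_le μ measurable_id measurable_id) W2_nonneg

theorem W2_dirac_zero_le [IsProbabilityMeasure μ] : W2 μ (Measure.dirac 0) ≤ M2 μ := by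
  simpa [M2] using W2_map_map_le μ measurable_id (measurable_const (a := (0 : Vec d)))

theorem norm_toLp_eq_sqrt_integral {Ω H : Type*} [MeasurableSpace Ω] {ρ : Measure Ω}
    [NormedAddCommGroup H] [InnerProductSpace ℝ H] {f : Ω → H} (hf : MemLp f 2 ρ) :
    ‖hf.toLp f‖ = √(∫ ω, ‖f ω‖ ^ 2 ∂ρ) := by
  rw [norm_eq_sqrt_real_inner, L2.inner_def]
  congr 1
  refine integral_congr_ae (hf.coeFn_toLp.mono fun ω hω => ?_)
  simp only [hω, real_inner_self_eq_norm_sq]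

/-- The image of `μ` under the radial projection of `𝒫₂` onto its `M₂`-ball of radius `n`:
the law of the projection onto the ball of radius `n` of `L²` of a variable of law `μ`. -/
def truncate (n : ℝ) (μ : Measure (Vec d)) : Measure (Vec d) :=
  μ.map (radialFactor n (M2 μ) • ·)

theorem IsP2.truncate (hμ : IsP2 μ) : IsP2 (truncate n μ) := hμ.map_smul _

theorem M2_truncate (hn : 0 < n) : M2 (truncate n μ) = min n (M2 μ) := by
  rw [truncate, M2_map_smul, abs_of_pos (radialFactor_pos hn), radialFactor_mul_self hn]

theorem M2_truncate_le (hn : 0 < n) : M2 (truncate n μ) ≤ M2 μ :=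
  (M2_truncate hn).trans_le (min_le_right _ _)

theorem truncate_eq_self (hn : 0 < n) (hμ : M2 μ ≤ n) : truncate n μ = μ := by
  simp [truncate, radialFactor_eq_one hn hμ]

theorem truncate_dirac (x : Vec d) :
    truncate n (Measure.dirac x) = Measure.dirac (radialFactor n ‖x‖ • x) := by
  rw [truncate, M2_dirac, Measure.map_dirac' (by fun_prop)]

theorem M2_map_eq_norm_toLp {Ω : Type*} [MeasurableSpace Ω] {ρ : Measure Ω} {f : Ω → Vec d}
    (hf : Measurable f) (hf₂ : MemLp f 2 ρ) : M2 (ρ.map f) = ‖hf₂.toLp f‖ := by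
  rw [M2, integral_map hf.aemeasurable (by fun_prop), norm_toLp_eq_sqrt_integral]

theorem W2_truncate_map_le {Ω : Type*} [MeasurableSpace Ω] {ρ : Measure Ω} {f g : Ω → Vec d}
    (hf : Measurable f) (hg : Measurable g) (hf₂ : MemLp f 2 ρ) (hg₂ : MemLp g 2 ρ) (hn : 0 < n) :
    W2 (truncate n (ρ.map f)) (truncate n (ρ.map g)) ≤ √(∫ ω, ‖f ω - g ω‖ ^ 2 ∂ρ) := by
  rw [truncate, truncate, Measure.map_map (by fun_prop) hf, Measure.map_map (by fun_prop) hg,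
    M2_map_eq_norm_toLp hf hf₂, M2_map_eq_norm_toLp hg hg₂]
  set s := radialFactor n ‖hf₂.toLp f‖
  set t := radialFactor n ‖hg₂.toLp g‖
  calc W2 (ρ.map (s • f)) (ρ.map (t • g)) ≤ √(∫ ω, ‖(s • f - t • g) ω‖ ^ 2 ∂ρ) :=
        W2_map_map_le ρ (hf.const_smul s) (hg.const_smul t)
    _ = ‖s • hf₂.toLp f - t • hg₂.toLp g‖ := by
        rw [← MemLp.toLp_const_smul, ← MemLp.toLp_const_smul, ← MemLp.toLp_sub,
          norm_toLp_eq_sqrt_integral]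
    _ ≤ ‖hf₂.toLp f - hg₂.toLp g‖ := norm_radialFactor_smul_sub_le hn _ _
    _ = √(∫ ω, ‖f ω - g ω‖ ^ 2 ∂ρ) := by
        rw [← MemLp.toLp_sub, norm_toLp_eq_sqrt_integral]
        simp only [Pi.sub_apply]

theorem W2_truncate_le (hn : 0 < n) (hμ : IsP2 μ) (hν : IsP2 ν) :
    W2 (truncate n μ) (truncate n ν) ≤ W2 μ ν := by
  have := hμ.1
  have := hν.1
  refine le_csInf ⟨_, μ.prod ν, by simp, by simp, rfl⟩ ?_
  rintro _ ⟨p, rfl, rfl, rfl⟩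
  exact W2_truncate_map_le measurable_fst measurable_snd
    ((memLp_two_iff_integrable_sq_norm (by fun_prop)).2 (hμ.2.comp_measurable measurable_fst))
    ((memLp_two_iff_integrable_sq_norm (by fun_prop)).2 (hν.2.comp_measurable measurable_snd)) hn

end Wasserstein

section RegularCost

variable {d : ℕ} {A : Type*} [NormedAddCommGroup A] {γ lam n : ℝ} {c : ℝ≥0}
  {F : Measure (Vec d) → Vec d × A → ℝ} {μ ν : Measure (Vec d)} {p : Vec d × A}

/-- The approximation of level `n` of the cost `F`: truncate the measure, then take the Lipschitz
envelope in the state. On the ball of radius `n`, the state derivative of the truncated cost is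
at most `c * (1 + 4 * n)`, so that the envelope does not alter the cost there. -/
def approxCost (c : ℝ≥0) (n : ℝ) (F : Measure (Vec d) → Vec d × A → ℝ) (μ : Measure (Vec d)) :
    Vec d × A → ℝ :=
  partialEnvelope (c * (1 + 4 * n)) (F (truncate n μ))

/-- The growth constant of the approximations of a cost with growth constant `c` and convexity
gain `γ` in the state. -/
def approxConst (γ : ℝ) (c : ℝ≥0) : ℝ≥0 := c * (1 + 4 * c / γ.toNNReal)

theorem le_approxConst (γ : ℝ) (c : ℝ≥0) : c ≤ approxConst γ c :=
  le_mul_of_one_le_right' (le_add_of_nonneg_right zero_le)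

theorem coe_approxConst (hγ : 0 < γ) : (approxConst γ c : ℝ) = c * (1 + 4 * c / γ) := by
  simp [approxConst, hγ.le]

variable [NormedSpace ℝ A]

/-- The quantitative part of (A.2) and (A.5) for a cost on states `Vec d` and controls `A`, at
a fixed time. A terminal cost is viewed as a cost with trivial controls. -/
structure IsRegularCost (γ lam : ℝ) (c : ℝ≥0) (F : Measure (Vec d) → Vec d × A → ℝ) : Prop where
  isSmoothConvex : ∀ μ, IsP2 μ → IsSmoothConvex (2 * c) (quadGain γ lam) (F μ)
  growthLipschitz : ∀ μ ν, IsP2 μ → IsP2 ν →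
    GrowthLipschitz c (M2 μ + M2 ν) (W2 ν μ) (F μ) (F ν)

namespace IsRegularCost

variable (h : IsRegularCost γ lam c F)
include h

theorem differentiable (hμ : IsP2 μ) : Differentiable ℝ (F μ) :=
  (h.isSmoothConvex μ hμ).differentiable

theorem norm_fderiv_le (hμ : IsP2 μ) (p : Vec d × A) :
    ‖fderiv ℝ (F μ) p‖ ≤ c * (1 + 2 * ‖p‖ + 2 * M2 μ) := by
  have hgrowth := h.growthLipschitz μ μ hμ hμ
  rw [W2_self, ← two_mul] at hgrowth
  exact hgrowth.norm_fderiv_le (mul_nonneg zero_le_two M2_nonneg) c.coe_nonneg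

theorem abs_le (hμ : IsP2 μ) (p : Vec d × A) :
    |F μ p| ≤ |F (Measure.dirac 0) 0| + c * (1 + ‖p‖ + M2 μ) * (‖p‖ + M2 μ) := by
  have := hμ.1
  have hgrowth := h.growthLipschitz _ μ (isP2_dirac 0) hμ 0 p
  simp only [M2_dirac, norm_zero, add_zero, zero_add, sub_zero] at hgrowth
  have hW : c * (1 + ‖p‖ + M2 μ) * (‖p‖ + W2 μ (Measure.dirac 0)) ≤
      c * (1 + ‖p‖ + M2 μ) * (‖p‖ + M2 μ) := by
    have := M2_nonneg (μ := μ)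
    gcongr
    exact W2_dirac_zero_le
  linarith [abs_sub_abs_le_abs_sub (F μ p) (F (Measure.dirac 0) 0)]

theorem norm_fderivFst_truncate_le (hn : 0 < n) (hμ : IsP2 μ) (hp : ‖p‖ ≤ n) :
    ‖fderivFst (F (truncate n μ)) p‖ ≤ c * (1 + 4 * n) := by
  refine (norm_comp_inl_le _).trans ((h.norm_fderiv_le hμ.truncate p).trans ?_)
  exact mul_le_mul_of_nonneg_left
    (by linarith [(M2_truncate (μ := μ) hn).trans_le (min_le_left _ _)]) c.coe_nonneg

theorem approxCost_eq_truncate (hn : 0 < n) (hμ : IsP2 μ) (hp : ‖p‖ ≤ n) :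
    approxCost c n F μ p = F (truncate n μ) p :=
  (h.isSmoothConvex _ hμ.truncate).partialEnvelope_eq (h.norm_fderivFst_truncate_le hn hμ hp)

theorem approxCost_eq (hn : 0 < n) (hμ : IsP2 μ) (hμn : M2 μ ≤ n) (hp : ‖p‖ ≤ n) :
    approxCost c n F μ p = F μ p := by
  rw [h.approxCost_eq_truncate hn hμ hp, truncate_eq_self hn hμn]

theorem fderiv_approxCost_eq_truncate (hγ : 0 < γ) (hn : 0 < n) (hμ : IsP2 μ) (hp : ‖p‖ ≤ n) :
    fderiv ℝ (approxCost c n F μ) p = fderiv ℝ (F (truncate n μ)) p :=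
  (h.isSmoothConvex _ hμ.truncate).fderiv_partialEnvelope_eq hγ
    (h.norm_fderivFst_truncate_le hn hμ hp)

theorem exists_fderiv_approxCost_eq (hγ : 0 < γ) (hn : 0 < n) (hμ : IsP2 μ) (p : Vec d × A) :
    ∃ z, fderiv ℝ (approxCost c n F μ) p = fderiv ℝ (F (truncate n μ)) (z, p.2) :=
  ((h.isSmoothConvex _ hμ.truncate).exists_hasFDerivAt_partialEnvelope hγ (by positivity) p).imp
    fun _ hz => hz.fderiv

theorem norm_fderivFst_approxCost_le (hγ : 0 < γ) (hn : 0 < n) (hμ : IsP2 μ) (p : Vec d × A) :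
    ‖fderivFst (approxCost c n F μ) p‖ ≤ c * (1 + 4 * n) :=
  (h.isSmoothConvex _ hμ.truncate).norm_fderivFst_partialEnvelope_le hγ (by positivity) p

theorem growthLipschitz_truncate (hn : 0 < n) (hμ : IsP2 μ) (hν : IsP2 ν) :
    GrowthLipschitz c (M2 μ + M2 ν) (W2 ν μ) (F (truncate n μ)) (F (truncate n ν)) :=
  (h.growthLipschitz _ _ hμ.truncate hν.truncate).mono c.coe_nonneg
    (add_nonneg M2_nonneg M2_nonneg) (add_le_add (M2_truncate_le hn) (M2_truncate_le hn)) W2_nonneg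
    (W2_truncate_le hn hν hμ)

theorem norm_fderiv_truncate_le (hn : 0 < n) (hμ : IsP2 μ) (p : Vec d × A) :
    ‖fderiv ℝ (F (truncate n μ)) p‖ ≤ c * (1 + 2 * ‖p‖ + 2 * M2 μ) := by
  refine (h.norm_fderiv_le hμ.truncate p).trans ?_
  gcongr
  exact M2_truncate_le hn

theorem isRegularCost_approxCost (hγ : 0 < γ) (hn : 0 < n) :
    IsRegularCost 0 lam (approxConst γ c) (approxCost c n F) where
  isSmoothConvex μ hμ :=
    ((h.isSmoothConvex _ hμ.truncate).isSmoothConvex_partialEnvelope hγ (by positivity)).mono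
      (by gcongr; exact le_approxConst γ c)
  growthLipschitz μ ν hμ hν := by
    rw [coe_approxConst hγ]
    refine (h.isSmoothConvex _ hμ.truncate).growthLipschitz_partialEnvelope hγ (by positivity)
      (h.isSmoothConvex _ hν.truncate) c.coe_nonneg W2_nonneg (h.growthLipschitz_truncate hn hμ hν)
      (fun q => (h.norm_fderiv_truncate_le hn hμ q).trans ?_)
      (fun q => (h.norm_fderiv_truncate_le hn hν q).trans ?_)
    · gcongr
      exact le_add_of_nonneg_right M2_nonneg
    · gcongr
      exact le_add_of_nonneg_left M2_nonneg

theorem norm_gradient_fst_le (hμ : IsP2 μ) (x : Vec d) (a : A) :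
    ‖gradient (fun z => F μ (z, a)) x‖ ≤ c * (1 + 2 * ‖(x, a)‖ + 2 * M2 μ) := by
  rw [norm_gradient_slice_fst (h.differentiable hμ _)]
  exact (norm_comp_inl_le _).trans (h.norm_fderiv_le hμ _)

theorem norm_gradient_fst_approxCost_le (hγ : 0 < γ) (hn : 0 < n) (hμ : IsP2 μ) (x : Vec d)
    (a : A) : ‖gradient (fun z => approxCost c n F μ (z, a)) x‖ ≤ c * (1 + 4 * n) := by
  rw [norm_gradient_slice_fst ((h.isRegularCost_approxCost hγ hn).differentiable hμ _)]
  exact h.norm_fderivFst_approxCost_le hγ hn hμ _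

theorem gradient_fst_approxCost_eq (hγ : 0 < γ) (hn : 0 < n) (hμ : IsP2 μ) {x : Vec d} {a : A}
    (hxa : ‖(x, a)‖ ≤ n) : gradient (fun z => approxCost c n F μ (z, a)) x =
      gradient (fun z => F (truncate n μ) (z, a)) x := by
  rw [gradient_slice_fst ((h.isRegularCost_approxCost hγ hn).differentiable hμ _),
    gradient_slice_fst (h.differentiable hμ.truncate _), fderivFst, fderivFst,
    h.fderiv_approxCost_eq_truncate hγ hn hμ hxa]

theorem neg_mul_le_inner_gradient_approxCost (hγ : 0 < γ) (hn : 1 ≤ n)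
    (hmean : ∀ y : Vec d,
      -c * (1 + ‖y‖) ≤ ⟪y, gradient (fun z => F (Measure.dirac y) (z, 0)) 0⟫) (x : Vec d) :
    -(2 * c) * (1 + ‖x‖) ≤
      ⟪x, gradient (fun z => approxCost c n F (Measure.dirac x) (z, 0)) 0⟫ := by
  have hn₀ : 0 < n := by linarith
  rw [h.gradient_fst_approxCost_eq hγ hn₀ (isP2_dirac x) (by simpa using hn₀.le), truncate_dirac]
  exact neg_mul_le_inner_of_radialFactor_smul c.coe_nonneg hn (hmean _)

end IsRegularCost

end RegularCost

section RegularCostGradient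

variable {d : ℕ} {A : Type*} [NormedAddCommGroup A] [InnerProductSpace ℝ A] [CompleteSpace A]
  {γ lam n : ℝ} {c : ℝ≥0} {F : Measure (Vec d) → Vec d × A → ℝ} {μ : Measure (Vec d)}

namespace IsRegularCost

theorem of_gradient (hγ : 0 ≤ γ) (hlam : 0 ≤ lam)
    (hdiff : ∀ μ, IsP2 μ → Differentiable ℝ (F μ))
    (hlip : ∀ μ, IsP2 μ → LipschitzWith c fun p : Vec d × A =>
      (gradient (fun x => F μ (x, p.2)) p.1, gradient (fun a => F μ (p.1, a)) p.2))
    (hgain : ∀ μ, IsP2 μ → ∀ (x x' : Vec d) (a a' : A),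
      γ * ‖x' - x‖ ^ 2 + lam * ‖a' - a‖ ^ 2 ≤ F μ (x', a') - F μ (x, a)
        - ⟪x' - x, gradient (fun z => F μ (z, a)) x⟫ - ⟪a' - a, gradient (fun b => F μ (x, b)) a⟫)
    (hgrowth : ∀ μ ν, IsP2 μ → IsP2 ν →
      GrowthLipschitz c (M2 μ + M2 ν) (W2 ν μ) (F μ) (F ν)) : IsRegularCost γ lam c F where
  isSmoothConvex μ hμ := by
    refine .of_norm_fderiv_sub_le (hdiff μ hμ) (fun u => by unfold quadGain; positivity)
      (fun p q => ?_)
      fun p q => norm_fderiv_sub_le_of_lipschitzWith_gradient (hdiff μ hμ) (hlip μ hμ) q p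
    rw [bregman_eq_sub_inner_gradient (hdiff μ hμ p)]
    exact hgain μ hμ p.1 q.1 p.2 q.2
  growthLipschitz := hgrowth

variable (h : IsRegularCost γ lam c F)
include h

theorem lipschitzWith_gradient (hμ : IsP2 μ) : LipschitzWith (4 * c) fun p : Vec d × A =>
    (gradient (fun x => F μ (x, p.2)) p.1, gradient (fun a => F μ (p.1, a)) p.2) := by
  refine lipschitzWith_gradient_of_norm_fderiv_sub_le (h.differentiable hμ) fun p q => ?_
  refine ((h.isSmoothConvex μ hμ).norm_fderiv_sub_le p q).trans_eq ?_
  push_cast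
  ring

theorem norm_gradient_snd_le (hμ : IsP2 μ) (x : Vec d) (a : A) :
    ‖gradient (fun b => F μ (x, b)) a‖ ≤ c * (1 + 2 * ‖(x, a)‖ + 2 * M2 μ) :=
  (norm_gradient_slice_snd_le (h.differentiable hμ _)).trans (h.norm_fderiv_le hμ _)

theorem exists_gradient_snd_approxCost_eq (hγ : 0 < γ) (hn : 0 < n) (hμ : IsP2 μ) (x : Vec d)
    (a : A) : ∃ z, gradient (fun b => approxCost c n F μ (x, b)) a =
      gradient (fun b => F (truncate n μ) (z, b)) a := by
  obtain ⟨z, hz⟩ := h.exists_fderiv_approxCost_eq hγ hn hμ (x, a)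
  refine ⟨z, ?_⟩
  rw [gradient_slice_snd ((h.isRegularCost_approxCost hγ hn).differentiable hμ _),
    gradient_slice_snd (h.differentiable hμ.truncate _), hz]

end IsRegularCost

end RegularCostGradient

section Conditions

variable {T : ℝ} {d k : ℕ} {lam γ n : ℝ} {c cL : ℝ≥0}
  {f : ℝ → Vec d → Measure (Vec d) → Vec k → ℝ} {g : Vec d → Measure (Vec d) → ℝ}

theorem isRegularCost_of_condA2 (hlam : 0 ≤ lam) (hγ : 0 ≤ γ) (h₂ : CondA2 T d k lam cL f)
    (h₅ : CondA5 T d k cL f g)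
    (hf : ∀ t ∈ Set.Icc (0 : ℝ) T, ∀ μ : Measure (Vec d), IsP2 μ →
      ∀ (x x' : Vec d) (a a' : Vec k),
        f t x' μ a' - f t x μ a - ⟪x' - x, gradient (fun z => f t z μ a) x⟫
          - ⟪a' - a, gradient (fun b => f t x μ b) a⟫
        ≥ γ * ‖x' - x‖ ^ 2 + lam * ‖a' - a‖ ^ 2) {t : ℝ} (ht : t ∈ Set.Icc (0 : ℝ) T) :
    IsRegularCost γ lam cL fun μ (p : Vec d × Vec k) => f t p.1 μ p.2 := by
  refine .of_gradient hγ hlam (fun μ hμ => (h₂ t ht μ hμ).1.differentiable one_ne_zero)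
    (fun μ hμ => (h₂ t ht μ hμ).2.1) (hf t ht) fun μ ν hμ hν p p' => ?_
  rw [← add_assoc]
  exact h₅.2.1 t ht p.1 p'.1 p.2 p'.2 μ ν hμ hν

theorem isRegularCost_of_condA4 {A : Type*} [NormedAddCommGroup A] [InnerProductSpace ℝ A]
    [CompleteSpace A] (hγ : 0 ≤ γ) (h₄ : CondA4 d cL g) (h₅ : CondA5 T d k cL f g)
    (hg : ∀ μ : Measure (Vec d), IsP2 μ → ∀ x x' : Vec d,
      g x' μ - g x μ - ⟪x' - x, gradient (fun z => g z μ) x⟫ ≥ γ * ‖x' - x‖ ^ 2) :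
    IsRegularCost γ 0 cL fun μ (p : Vec d × A) => g p.1 μ := by
  refine .of_gradient hγ le_rfl
    (fun μ hμ => ((h₄.2 μ hμ).1.differentiable one_ne_zero).comp differentiable_fst)
    (fun μ hμ => ?_) (fun μ hμ x x' a a' => ?_) fun μ ν hμ hν p p' => ?_
  · refine LipschitzWith.of_dist_le_mul fun p q => max_le ?_ ?_
    · exact ((h₄.2 μ hμ).2.2.dist_le_mul p.1 q.1).trans (by gcongr; exact le_max_left _ _)
    · simp only [gradient_fun_const, dist_self]
      positivity
  · simpa [gradient_fun_const] using hg μ hμ x x'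
  · have := add_nonneg (M2_nonneg (μ := μ)) (M2_nonneg (μ := ν))
    have := W2_nonneg (μ := ν) (ν := μ)
    refine (h₅.2.2 p.1 p'.1 μ ν hμ hν).trans ?_
    rw [add_assoc _ (M2 μ)]
    gcongr
    exacts [norm_fst_le p', norm_fst_le p, norm_fst_le (p' - p)]

theorem condA2_of_isRegularCost
    (h : ∀ t ∈ Set.Icc (0 : ℝ) T,
      IsRegularCost 0 lam c fun μ (p : Vec d × Vec k) => f t p.1 μ p.2) :
    CondA2 T d k lam (4 * c) f := fun t ht μ hμ => by
  have hconv := (h t ht).isSmoothConvex μ hμ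
  refine ⟨hconv.contDiff, (h t ht).lipschitzWith_gradient hμ, fun x x' a a' => ?_⟩
  have hgain := hconv.gain_le (x, a) (x', a')
  rw [bregman_eq_sub_inner_gradient (hconv.differentiable _)] at hgain
  simpa [quadGain] using hgain

theorem condA2loc_of_isRegularCost
    (h : ∀ t ∈ Set.Icc (0 : ℝ) T,
      IsRegularCost γ lam c fun μ (p : Vec d × Vec k) => f t p.1 μ p.2)
    (h₀ : ∀ t ∈ Set.Icc (0 : ℝ) T, |f t 0 (Measure.dirac 0) 0| ≤ c) :
    CondA2loc T d k f := fun R hR => by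
  refine ⟨c + c * (1 + R + R) * (R + R) + c * (1 + 2 * R + 2 * R), fun t ht x a μ hμ hx ha hM => ?_⟩
  have hxa : ‖(x, a)‖ ≤ R := max_le hx ha
  have hM₀ := M2_nonneg (μ := μ)
  have hvalue : |f t x μ a| ≤ c + c * (1 + R + R) * (R + R) :=
    ((h t ht).abs_le hμ (x, a)).trans (add_le_add (h₀ t ht) (by gcongr))
  have hderiv : c * (1 + 2 * ‖(x, a)‖ + 2 * M2 μ) ≤ c * (1 + 2 * R + 2 * R) := by gcongr
  have hvalue₀ : 0 ≤ c + c * (1 + R + R) * (R + R) := by positivity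
  have hderiv₀ : 0 ≤ c * (1 + 2 * R + 2 * R) := by positivity
  refine ⟨hvalue.trans (le_add_of_nonneg_right hderiv₀), ?_, ?_⟩
  · exact ((h t ht).norm_gradient_fst_le hμ x a).trans
      (hderiv.trans (le_add_of_nonneg_left hvalue₀))
  · exact ((h t ht).norm_gradient_snd_le hμ x a).trans
      (hderiv.trans (le_add_of_nonneg_left hvalue₀))

theorem condA4_of_isRegularCost {A : Type*} [NormedAddCommGroup A] [InnerProductSpace ℝ A]
    [CompleteSpace A] {G : Measure (Vec d) → Vec d × A → ℝ} (h : IsRegularCost γ lam c G) :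
    CondA4 d (4 * c) fun x μ => G μ (x, 0) := by
  refine ⟨fun R hR => ⟨|G (Measure.dirac 0) 0| + c * (1 + R + R) * (R + R),
    fun x μ hμ hx hM => ?_⟩, fun μ hμ => ⟨?_, ?_, ?_⟩⟩
  · have hM₀ := M2_nonneg (μ := μ)
    have hx₀ : ‖(x, (0 : A))‖ ≤ R := max_le hx (by simpa using hR.le)
    exact (h.abs_le hμ (x, 0)).trans (by gcongr)
  · exact (h.isSmoothConvex μ hμ).contDiff.comp (contDiff_prodMk_left 0)
  · have hconv := (h.isSmoothConvex μ hμ).convexOn.comp_linearMap (LinearMap.inl ℝ (Vec d) A)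
    exact hconv
  · refine LipschitzWith.of_dist_le_mul fun x y => ?_
    have hdist := (h.lipschitzWith_gradient hμ).dist_le_mul (x, 0) (y, 0)
    rw [Prod.dist_eq] at hdist
    simpa using (max_le_iff.1 hdist).1

end Conditions

section Monotonicity

variable {T : ℝ} {d k : ℕ} {c c' : ℝ≥0}
  {f : ℝ → Vec d → Measure (Vec d) → Vec k → ℝ} {g : Vec d → Measure (Vec d) → ℝ}

theorem CondA5.mono (h : CondA5 T d k c f g) (hc : c ≤ c') : CondA5 T d k c' f g := by
  have hc : (c : ℝ) ≤ c' := hc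
  refine ⟨fun t ht => ?_, fun t ht x x' a a' μ μ' hμ hμ' => ?_, fun x x' μ μ' hμ hμ' => ?_⟩
  · obtain ⟨hvalue, hfst, hsnd⟩ := h.1 t ht
    exact ⟨hvalue.trans hc, hfst.trans hc, hsnd.trans hc⟩
  · have := M2_nonneg (μ := μ)
    have := M2_nonneg (μ := μ')
    have := W2_nonneg (μ := μ') (ν := μ)
    exact (h.2.1 t ht x x' a a' μ μ' hμ hμ').trans (by gcongr)
  · have := M2_nonneg (μ := μ)
    have := M2_nonneg (μ := μ')
    have := W2_nonneg (μ := μ') (ν := μ)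
    exact (h.2.2 x x' μ μ' hμ hμ').trans (by gcongr)

theorem CondA6.mono (h : CondA6 T d k c f) (hc : c ≤ c') : CondA6 T d k c' f :=
  fun t ht x μ hμ => (h t ht x μ hμ).trans (NNReal.coe_le_coe.2 hc)

theorem CondA7.mono (h : CondA7 T d k c f g) (hc : c ≤ c') : CondA7 T d k c' f g :=
  fun t ht x => by
    have hbound : -(c' : ℝ) * (1 + ‖x‖) ≤ -(c : ℝ) * (1 + ‖x‖) := by gcongr
    exact ⟨hbound.trans (h t ht x).1, hbound.trans (h t ht x).2⟩

end Monotonicity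

section Approximation

variable {T : ℝ} {d k : ℕ} {lam γ n : ℝ} {cL : ℝ≥0}
  {f : ℝ → Vec d → Measure (Vec d) → Vec k → ℝ} {g : Vec d → Measure (Vec d) → ℝ}

/-- The approximation `fⁿ` of the running cost. -/
def approxRunning (cL : ℝ≥0) (n : ℝ) (f : ℝ → Vec d → Measure (Vec d) → Vec k → ℝ) (t : ℝ)
    (x : Vec d) (μ : Measure (Vec d)) (a : Vec k) : ℝ :=
  approxCost cL n (fun ν (p : Vec d × Vec k) => f t p.1 ν p.2) μ (x, a)

/-- The approximation `gⁿ` of the terminal cost, seen as a cost with controls in `ℝ⁰`. -/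
def approxTerminal (cL : ℝ≥0) (n : ℝ) (g : Vec d → Measure (Vec d) → ℝ) (x : Vec d)
    (μ : Measure (Vec d)) : ℝ :=
  approxCost cL n (fun ν (p : Vec d × Vec 0) => g p.1 ν) μ (x, 0)

theorem approxRunning_zero_dirac_zero (hn : 0 < n) {t : ℝ}
    (hf : IsRegularCost γ lam cL fun μ (p : Vec d × Vec k) => f t p.1 μ p.2) :
    approxRunning cL n f t 0 (Measure.dirac 0) 0 = f t 0 (Measure.dirac 0) 0 :=
  hf.approxCost_eq hn (isP2_dirac 0) (by simpa [M2_dirac] using hn.le) (by simpa using hn.le)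

theorem condA6_approxRunning (hγ : 0 < γ) (hn : 0 < n)
    (hf : ∀ t ∈ Set.Icc (0 : ℝ) T,
      IsRegularCost γ lam cL fun μ (p : Vec d × Vec k) => f t p.1 μ p.2)
    (h₆ : CondA6 T d k cL f) : CondA6 T d k cL (approxRunning cL n f) := fun t ht x μ hμ => by
  obtain ⟨z, hz⟩ := (hf t ht).exists_gradient_snd_approxCost_eq hγ hn hμ x 0
  exact (congrArg _ hz).trans_le (h₆ t ht z _ hμ.truncate)

theorem condA5_approx (hγ : 0 < γ) (hn : 0 < n)
    (hf : ∀ t ∈ Set.Icc (0 : ℝ) T,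
      IsRegularCost γ lam cL fun μ (p : Vec d × Vec k) => f t p.1 μ p.2)
    (hg : IsRegularCost γ 0 cL fun μ (p : Vec d × Vec 0) => g p.1 μ)
    (h₅ : CondA5 T d k cL f g) (h₆ : CondA6 T d k cL f) :
    CondA5 T d k (approxConst γ cL) (approxRunning cL n f) (approxTerminal cL n g) := by
  have hc : (cL : ℝ) ≤ approxConst γ cL := le_approxConst γ cL
  refine ⟨fun t ht => ⟨?_, ?_, ?_⟩, fun t ht x x' a a' μ μ' hμ hμ' => ?_,
    fun x x' μ μ' hμ hμ' => ?_⟩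
  · rw [approxRunning_zero_dirac_zero hn (hf t ht)]
    exact (h₅.1 t ht).1.trans hc
  · have hgrad := (hf t ht).gradient_fst_approxCost_eq hγ hn (isP2_dirac 0)
      (x := 0) (a := 0) (by simpa using hn.le)
    rw [truncate_eq_self hn (by simpa [M2_dirac] using hn.le)] at hgrad
    exact (congrArg _ hgrad).trans_le ((h₅.1 t ht).2.1.trans hc)
  · exact (condA6_approxRunning hγ hn hf h₆ t ht 0 _ (isP2_dirac 0)).trans hc
  · rw [add_assoc _ (M2 μ)]
    exact ((hf t ht).isRegularCost_approxCost hγ hn).growthLipschitz μ μ' hμ hμ' (x, a) (x', a')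
  · have hgrowth := (hg.isRegularCost_approxCost hγ hn).growthLipschitz μ μ' hμ hμ' (x, 0) (x', 0)
    simpa [approxTerminal, Prod.norm_mk, add_assoc] using hgrowth

theorem condA7_approx (hγ : 0 < γ) (hn : 1 ≤ n)
    (hf : ∀ t ∈ Set.Icc (0 : ℝ) T,
      IsRegularCost γ lam cL fun μ (p : Vec d × Vec k) => f t p.1 μ p.2)
    (hg : IsRegularCost γ 0 cL fun μ (p : Vec d × Vec 0) => g p.1 μ) (h₇ : CondA7 T d k cL f g) :
    CondA7 T d k (2 * cL) (approxRunning cL n f) (approxTerminal cL n g) := fun t ht x => by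
  push_cast
  exact ⟨(hf t ht).neg_mul_le_inner_gradient_approxCost hγ hn (fun y => (h₇ t ht y).1) x,
    hg.neg_mul_le_inner_gradient_approxCost hγ hn (fun y => (h₇ t ht y).2) x⟩

theorem costAssumptions_approx (hγ : 0 < γ) (hn : 1 ≤ n)
    (hf : ∀ t ∈ Set.Icc (0 : ℝ) T,
      IsRegularCost γ lam cL fun μ (p : Vec d × Vec k) => f t p.1 μ p.2)
    (hg : IsRegularCost γ 0 cL fun μ (p : Vec d × Vec 0) => g p.1 μ)
    (h₅ : CondA5 T d k cL f g) (h₆ : CondA6 T d k cL f) (h₇ : CondA7 T d k cL f g) :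
    CostAssumptions T d k lam (4 * approxConst γ cL) (approxRunning cL n f)
      (approxTerminal cL n g) := by
  have hn₀ : 0 < n := one_pos.trans_le hn
  have hc := le_approxConst γ cL
  have hc₁ : approxConst γ cL ≤ 4 * approxConst γ cL := le_mul_of_one_le_left' (by norm_num)
  have hc₂ : 2 * cL ≤ 4 * approxConst γ cL := mul_le_mul' (by norm_num) hc
  have hfn := fun t ht => (hf t ht).isRegularCost_approxCost hγ hn₀
  have h₅' := condA5_approx hγ hn₀ hf hg h₅ h₆
  exact ⟨condA2_of_isRegularCost hfn, condA2loc_of_isRegularCost hfn fun t ht => (h₅'.1 t ht).1,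
    condA4_of_isRegularCost (hg.isRegularCost_approxCost hγ hn₀), h₅'.mono hc₁,
    (condA6_approxRunning hγ hn₀ hf h₆).mono (hc.trans hc₁),
    (condA7_approx hγ hn hf hg h₇).mono hc₂⟩

theorem statement11_general (hlam : 0 ≤ lam) (hγ : 0 < γ) (hfg : CostAssumptions T d k lam cL f g)
    (hf : ∀ t ∈ Set.Icc (0 : ℝ) T, ∀ μ : Measure (Vec d), IsP2 μ →
      ∀ (x x' : Vec d) (a a' : Vec k),
        f t x' μ a' - f t x μ a - ⟪x' - x, gradient (fun z => f t z μ a) x⟫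
          - ⟪a' - a, gradient (fun b => f t x μ b) a⟫
        ≥ γ * ‖x' - x‖ ^ 2 + lam * ‖a' - a‖ ^ 2)
    (hg : ∀ μ : Measure (Vec d), IsP2 μ → ∀ x x' : Vec d,
      g x' μ - g x μ - ⟪x' - x, gradient (fun z => g z μ) x⟫ ≥ γ * ‖x' - x‖ ^ 2) :
    ∃ (fn : ℕ → ℝ → Vec d → Measure (Vec d) → Vec k → ℝ) (gn : ℕ → Vec d → Measure (Vec d) → ℝ),
      (∀ n : ℕ, 1 ≤ n →
        CostAssumptions T d k lam (4 * approxConst γ cL) (fn n) (gn n) ∧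
        ∃ B : ℝ, ∀ t ∈ Set.Icc (0 : ℝ) T, ∀ (x : Vec d) (a : Vec k) (μ : Measure (Vec d)),
          IsP2 μ →
            ‖gradient (fun z => fn n t z μ a) x‖ ≤ B ∧ ‖gradient (fun z => gn n z μ) x‖ ≤ B) ∧
      (∀ R > 0, ∃ n₀ : ℕ, ∀ n ≥ n₀,
        ∀ t ∈ Set.Icc (0 : ℝ) T, ∀ (x : Vec d) (a : Vec k) (μ : Measure (Vec d)),
          IsP2 μ → ‖x‖ ≤ R → ‖a‖ ≤ R → M2 μ ≤ R →
            fn n t x μ a = f t x μ a ∧ gn n x μ = g x μ) := by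
  obtain ⟨h₂, -, h₄, h₅, h₆, h₇⟩ := hfg
  have hfreg := fun t ht => isRegularCost_of_condA2 hlam hγ.le h₂ h₅ hf (t := t) ht
  have hgreg := isRegularCost_of_condA4 (A := Vec 0) hγ.le h₄ h₅ hg
  refine ⟨fun n => approxRunning cL n f, fun n => approxTerminal cL n g, fun n hn => ⟨?_, ?_⟩,
    fun R hR => ⟨⌈R⌉₊, fun n hn t ht x a μ hμ hx ha hM => ?_⟩⟩
  · exact costAssumptions_approx hγ (Nat.one_le_cast.2 hn) hfreg hgreg h₅ h₆ h₇
  · have hn₀ : (0 : ℝ) < n := Nat.cast_pos.2 hn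
    exact ⟨cL * (1 + 4 * n), fun t ht x a μ hμ =>
      ⟨(hfreg t ht).norm_gradient_fst_approxCost_le hγ hn₀ hμ x a,
        hgreg.norm_gradient_fst_approxCost_le hγ hn₀ hμ x 0⟩⟩
  · have hRn : R ≤ n := Nat.ceil_le.1 hn
    have hn₀ : (0 : ℝ) < n := hR.trans_le hRn
    have hxn : ‖x‖ ≤ n := hx.trans hRn
    exact ⟨(hfreg t ht).approxCost_eq hn₀ hμ (hM.trans hRn) (max_le hxn (ha.trans hRn)),
      hgreg.approxCost_eq hn₀ hμ (hM.trans hRn) (max_le hxn (by simp))⟩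

end Approximation

/-- Existence of approximating sequences: if, in addition to (A.1)--(A.7),
`f` and `g` are `γ`-strongly convex in `x`, then there exist parameters `λ', c_L'` depending
only upon `λ, c_L, γ` (and the structural data `T, d, k`), and sequences `(fⁿ), (gⁿ)` satisfying
(A.1)--(A.7) with these parameters, with bounded gradients in `x`, and coinciding with `(f,g)`
on every bounded set for `n` large enough. -/
theorem statement11
    (T : ℝ) (hT : 0 < T) (d k : ℕ) (lam : ℝ) (hlam : 0 < lam) (cL : ℝ≥0) (hcL : 0 < cL)
    (γ : ℝ) (hγ : 0 < γ) :
    ∃ (lam' : ℝ) (cL' : ℝ≥0), 0 < lam' ∧ 0 < cL' ∧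
      ∀ (f : ℝ → Vec d → Measure (Vec d) → Vec k → ℝ) (g : Vec d → Measure (Vec d) → ℝ),
        CostAssumptions T d k lam cL f g →
        -- γ-strong convexity of `f` in `x` (with gain `λ` in `α`)
        (∀ t ∈ Set.Icc (0:ℝ) T, ∀ μ : Measure (Vec d), IsP2 μ →
          ∀ (x x' : Vec d) (a a' : Vec k),
            f t x' μ a' - f t x μ a - ⟪x' - x, gradient (fun z => f t z μ a) x⟫
              - ⟪a' - a, gradient (fun b => f t x μ b) a⟫
            ≥ γ * ‖x' - x‖ ^ 2 + lam * ‖a' - a‖ ^ 2) →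
        -- γ-strong convexity of `g` in `x`
        (∀ μ : Measure (Vec d), IsP2 μ → ∀ x x' : Vec d,
          g x' μ - g x μ - ⟪x' - x, gradient (fun z => g z μ) x⟫ ≥ γ * ‖x' - x‖ ^ 2) →
        ∃ (fn : ℕ → ℝ → Vec d → Measure (Vec d) → Vec k → ℝ)
          (gn : ℕ → Vec d → Measure (Vec d) → ℝ),
          -- (i)
          (∀ n : ℕ, 1 ≤ n →
            CostAssumptions T d k lam' cL' (fn n) (gn n) ∧
            ∃ B : ℝ, ∀ t ∈ Set.Icc (0:ℝ) T, ∀ (x : Vec d) (a : Vec k) (μ : Measure (Vec d)),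
              IsP2 μ →
                ‖gradient (fun z => fn n t z μ a) x‖ ≤ B ∧
                ‖gradient (fun z => gn n z μ) x‖ ≤ B) ∧
          -- (ii)
          (∀ R > 0, ∃ n₀ : ℕ, ∀ n ≥ n₀,
            ∀ t ∈ Set.Icc (0:ℝ) T, ∀ (x : Vec d) (a : Vec k) (μ : Measure (Vec d)),
              IsP2 μ → ‖x‖ ≤ R → ‖a‖ ≤ R → M2 μ ≤ R →
                fn n t x μ a = f t x μ a ∧ gn n x μ = g x μ) :=
  ⟨lam, 4 * approxConst γ cL, hlam, by have := hcL.trans_le (le_approxConst γ cL); positivity,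
    fun _ _ hfg hf hg => statement11_general hlam.le hγ hfg hf hg⟩
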